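/- There is a universal constant C ∈ (0,∞) such that for every p, q ∈ [1,∞), every Banach space (X,‖·‖_X), and every smooth compactly supported f : ℍ(ℝ) → X, (∫₀^∞ (∫_{ℍ(ℝ)} ‖f(hc^t) − f(h)‖_X^p dμ(h))^{q/p} dt/t^{1+q/2})^{1/q} ≤ C (∫₀^∞ t^{q/2−1} ‖Q_t * f‖_{L_p(ℍ(ℝ),X)}^q dt)^{1/q}. -/

import Mathlib

open MeasureTheory

/-- The real Heisenberg group `ℍ(ℝ)`, identified with `ℝ³`; the Lebesgue measure
(`volume`) is a Haar measure for the Heisenberg group structure. -/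
abbrev HR : Type := ℝ × ℝ × ℝ

namespace HR

/-- Right translation by the central element `c^t`: `h ↦ h·c^t`. -/
def vmul (t : ℝ) (h : HR) : HR := (h.1, h.2.1, h.2.2 + t)

/-- The Poisson kernel `P_t(u) = t/(π(t²+u²))` on `ℝ`. -/
noncomputable def Pker (t u : ℝ) : ℝ := t / (Real.pi * (t ^ 2 + u ^ 2))

/-- `Q_t(u) = ∂P_t/∂t(u) = (u²−t²)/(π(t²+u²)²)`. -/
noncomputable def Qker (t u : ℝ) : ℝ := (u ^ 2 - t ^ 2) / (Real.pi * (t ^ 2 + u ^ 2) ^ 2)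

variable {X : Type*} [NormedAddCommGroup X] [NormedSpace ℝ X]

/-- Convolution of a kernel `ψ : ℝ → ℝ` with `g : ℍ(ℝ) → X` along the center:
`(ψ*g)(x,y,z) = ∫_ℝ ψ(u) g(x,y,z−u) du`. -/
noncomputable def conv (ψ : ℝ → ℝ) (g : HR → X) (h : HR) : X :=
  ∫ u : ℝ, ψ u • g (h.1, h.2.1, h.2.2 - u)

/-- The left-invariant horizontal derivative `∂_a f = ∂f/∂x`. -/
noncomputable def da (f : HR → X) (h : HR) : X := fderiv ℝ f h (1, 0, 0)

/-- The left-invariant horizontal derivative `∂_b f = ∂f/∂y + x·∂f/∂z`. -/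
noncomputable def db (f : HR → X) (h : HR) : X :=
  fderiv ℝ f h (0, 1, 0) + h.1 • fderiv ℝ f h (0, 0, 1)

end HR

/-!
Fix `h` and put `φ(z) = f(h c^z)`, so that `Q_t * f` restricts to `Q_t * φ` on the central line
through `h`. An increment `φ(x + s) - φ(x)` differs from that of `P_s * φ` by two terms
`φ - P_s * φ`, and since `∂P_t/∂t = Q_t`, each is the integral of `Q_r * φ` over `0 < r < s`.
The increment of `P_s * φ` is the integral over `a > s/2` of that of `2 Q_{2a} * φ`. The semigroup
law gives `Q_{2a} = P_a * Q_a`, and the increment of `P_a` by `s` has `L_1` norm at most `s/a`.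

By Minkowski's inequality and the invariance of `μ` under central translations, the `L_p` norm of
`h ↦ f(h c^s) - f(h)` is then at most `2 ∫_{r<s} B(r) dr + ∫_{a>s/2} (2s/a) B(a) da`, where
`B(t) = ‖Q_t * f‖_p`. The substitution `r = vs` exhibits this as `s ∫ K(v) B(vs) dv`. Dilation by
`v` scales the norm of `L_q(s^{q/2-1} ds)` by `v^{-1/2}`, so a second application of Minkowski's
inequality gives the theorem with `C = ∫ K(v) v^{-1/2} dv = 4 + 4√2`, independent of `p` and `q`.
-/

section MixedNorms

open Set Filter
open scoped ENNReal

variable {α β : Type*} [MeasurableSpace α] [MeasurableSpace β] {μ : Measure α} {ν : Measure β}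

theorem lintegral_rpow_le_lintegral_rpow_mul_lintegral_rpow {p : ℝ} (hp : 1 ≤ p)
    {g w : β → ℝ≥0∞} (hg : AEMeasurable g ν) (hw : AEMeasurable w ν)
    (hw₀ : ∀ᵐ b ∂ν, w b = 0 → g b = 0) (hw_top : ∀ᵐ b ∂ν, w b ≠ ∞) :
    (∫⁻ b, g b ∂ν) ^ p ≤ (∫⁻ b, g b ^ p * w b ^ (1 - p) ∂ν) * (∫⁻ b, w b ∂ν) ^ (p - 1) := by
  have hp₀ : 0 < p := by positivity
  have hfactor : ∀ᵐ b ∂ν, g b ≤ (g b ^ p * w b ^ (1 - p)) ^ p⁻¹ * w b ^ (1 - p⁻¹) := by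
    filter_upwards [hw₀, hw_top] with b h0 htop
    rcases eq_or_ne (w b) 0 with hb | hb
    · simp [h0 hb]
    · rw [ENNReal.mul_rpow_of_nonneg _ _ (by positivity), ENNReal.rpow_rpow_inv hp₀.ne',
        ← ENNReal.rpow_mul, mul_assoc, ← ENNReal.rpow_add _ _ hb htop, sub_mul, one_mul,
        mul_inv_cancel₀ hp₀.ne', add_comm, sub_add_sub_cancel', sub_self, ENNReal.rpow_zero,
        mul_one]
  have hHolder : ∫⁻ b, g b ∂ν ≤
      (∫⁻ b, g b ^ p * w b ^ (1 - p) ∂ν) ^ p⁻¹ * (∫⁻ b, w b ∂ν) ^ (1 - p⁻¹) :=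
    (lintegral_mono_ae hfactor).trans <| ENNReal.lintegral_mul_norm_pow_le
      ((hg.pow_const p).mul (hw.pow_const _)) hw (by positivity)
      (sub_nonneg.2 (inv_le_one_of_one_le₀ hp)) (by ring)
  calc (∫⁻ b, g b ∂ν) ^ p ≤ _ := ENNReal.rpow_le_rpow hHolder hp₀.le
    _ = _ := by
      rw [ENNReal.mul_rpow_of_nonneg _ _ hp₀.le, ENNReal.rpow_inv_rpow hp₀.ne',
        ← ENNReal.rpow_mul, sub_mul, one_mul, inv_mul_cancel₀ hp₀.ne']

theorem measurable_essSup_prodMk_left [SFinite μ] {F : β → α → ℝ≥0∞}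
    (hF : Measurable (Function.uncurry F)) : Measurable fun b => essSup (F b) μ := by
  refine measurable_of_Iic fun c => ?_
  have hpreimage : (fun b => essSup (F b) μ) ⁻¹' Iic c = {b | μ {a | c < F b a} = 0} := by
    ext b
    have hae : (∀ᵐ a ∂μ, F b a ≤ c) ↔ μ {a | c < F b a} = 0 := by simp [ae_iff]
    exact ⟨fun h => hae.1 ((ENNReal.ae_le_essSup (F b)).mono fun a ha => ha.trans h),
      fun h => essSup_le_of_ae_le c (hae.2 h)⟩
  rw [hpreimage]
  exact measurable_measure_prodMk_left (hF measurableSet_Ioi) (measurableSet_singleton 0)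

theorem measurable_eLpNorm_prodMk_left [SFinite μ] {ε : Type*} [ENorm ε] (p : ℝ≥0∞)
    {F : β → α → ε} (hF : Measurable fun x : β × α => ‖F x.1 x.2‖ₑ) :
    Measurable fun b => eLpNorm (F b) p μ := by
  rcases eq_or_ne p 0 with rfl | hp₀
  · simp
  rcases eq_or_ne p ∞ with rfl | hp
  · simpa [eLpNormEssSup] using measurable_essSup_prodMk_left (F := fun b a => ‖F b a‖ₑ) hF
  · simp only [eLpNorm_eq_lintegral_rpow_enorm_toReal hp₀ hp]
    exact (Measurable.lintegral_prod_right' (hF.pow_const _)).pow_const _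

theorem ae_ae_eq_zero_of_lintegral_eq_zero [SFinite μ] [SFinite ν] {G : β → α → ℝ≥0∞}
    (hG : Measurable (Function.uncurry G)) :
    ∀ᵐ a ∂μ, ∀ᵐ b ∂ν, ∫⁻ a', G b a' ∂μ = 0 → G b a = 0 := by
  have hint : Measurable fun b => ∫⁻ a', G b a' ∂μ := hG.lintegral_prod_right'
  refine (Measure.ae_ae_comm (p := fun b a => ∫⁻ a', G b a' ∂μ = 0 → G b a = 0) ?_).1
    (.of_forall fun b => Filter.eventually_imp_distrib_left.2 fun hb => ?_)
  · exact ((hint.comp measurable_fst) (measurableSet_singleton 0)).imp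
      (hG (measurableSet_singleton 0))
  · exact (lintegral_eq_zero_iff hG.of_uncurry_left).1 hb

theorem lintegral_rpow_lintegral_le [SFinite μ] [SFinite ν] {p : ℝ} (hp : 1 ≤ p)
    {F : β → α → ℝ≥0∞} (hF : Measurable (Function.uncurry F)) :
    ∫⁻ a, (∫⁻ b, F b a ∂ν) ^ p ∂μ ≤ (∫⁻ b, (∫⁻ a, F b a ^ p ∂μ) ^ p⁻¹ ∂ν) ^ p := by
  have hp₀ : 0 < p := by positivity
  -- Hölder with weight `N b`, the `p`-norm of `F b`, reduces the claim to Tonelli.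
  set N : β → ℝ≥0∞ := fun b => (∫⁻ a, F b a ^ p ∂μ) ^ p⁻¹
  have hN : Measurable N := (Measurable.lintegral_prod_right' (hF.pow_const p)).pow_const _
  have hN_pow (b : β) : ∫⁻ a, F b a ^ p ∂μ = N b ^ p := (ENNReal.rpow_inv_rpow hp₀.ne' _).symm
  rcases eq_or_ne (∫⁻ b, N b ∂ν) ∞ with htop | htop
  · simp [htop, hp₀]
  have hzero : ∀ᵐ a ∂μ, ∀ᵐ b ∂ν, N b = 0 → F b a = 0 := by
    filter_upwards [ae_ae_eq_zero_of_lintegral_eq_zero (μ := μ) (ν := ν)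
        (G := fun b a => F b a ^ p) (hF.pow_const p)] with a ha
    filter_upwards [ha] with b hb hNb
    exact (ENNReal.rpow_eq_zero_iff_of_pos hp₀).1 <|
      hb ((hN_pow b).trans (by rw [hNb, ENNReal.zero_rpow_of_pos hp₀]))
  have hN_le (b : β) : N b ^ (1 - p) * N b ^ p ≤ N b := by
    rcases eq_or_ne (N b) 0 with hb | hb
    · simp [hb, hp₀]
    rcases eq_or_ne (N b) ∞ with hb' | hb'
    · simp [hb']
    · rw [← ENNReal.rpow_add _ _ hb hb', sub_add_cancel, ENNReal.rpow_one]
  set I := ∫⁻ b, N b ∂ν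
  calc ∫⁻ a, (∫⁻ b, F b a ∂ν) ^ p ∂μ
      ≤ ∫⁻ a, (∫⁻ b, F b a ^ p * N b ^ (1 - p) ∂ν) * I ^ (p - 1) ∂μ :=
        lintegral_mono_ae <| hzero.mono fun a ha =>
          lintegral_rpow_le_lintegral_rpow_mul_lintegral_rpow hp
            (hF.comp measurable_prodMk_right).aemeasurable hN.aemeasurable ha
            ((ae_lt_top hN htop).mono fun _ h => h.ne)
    _ = (∫⁻ b, N b ^ (1 - p) * N b ^ p ∂ν) * I ^ (p - 1) := by
        rw [lintegral_mul_const'' _ (by fun_prop), lintegral_lintegral_swap (by fun_prop)]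
        simp_rw [mul_comm (_ ^ p), ← hN_pow]
        congr! 3 with b
        exact lintegral_const_mul _ ((hF.comp measurable_prodMk_left).pow_const p)
    _ ≤ I * I ^ (p - 1) := by gcongr with b; exact lintegral_mono hN_le
    _ = I ^ p := by
        nth_rw 1 [← ENNReal.rpow_one I]
        rw [← ENNReal.rpow_add_of_nonneg _ _ one_pos.le (sub_nonneg.2 hp), add_sub_cancel]

theorem eLpNorm_lintegral_le_lintegral_eLpNorm [SFinite μ] [SFinite ν] {p : ℝ≥0∞} (hp : 1 ≤ p)
    {F : β → α → ℝ≥0∞} (hF : Measurable (Function.uncurry F)) :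
    eLpNorm (fun a => ∫⁻ b, F b a ∂ν) p μ ≤ ∫⁻ b, eLpNorm (F b) p μ ∂ν := by
  rcases eq_or_ne p ∞ with rfl | hp_top
  · have hle : ∀ᵐ a ∂μ, ∀ᵐ b ∂ν, F b a ≤ essSup (F b) μ :=
      (Measure.ae_ae_comm (p := fun b a => F b a ≤ essSup (F b) μ)
        (measurableSet_le hF ((measurable_essSup_prodMk_left hF).comp measurable_fst))).1
        (.of_forall fun b => ENNReal.ae_le_essSup (F b))
    simpa [eLpNormEssSup] using
      essSup_le_of_ae_le _ (hle.mono fun a ha => lintegral_mono_ae ha)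
  · have hp₀ : p ≠ 0 := (one_pos.trans_le hp).ne'
    have hp' : 1 ≤ p.toReal := by
      simpa using ENNReal.toReal_mono hp_top hp
    simp only [eLpNorm_eq_lintegral_rpow_enorm_toReal hp₀ hp_top, enorm_eq_self, one_div]
    rw [ENNReal.rpow_inv_le_iff (by positivity)]
    exact lintegral_rpow_lintegral_le hp' hF

theorem eLpNorm_eq_ofReal_integral_norm_rpow {E : Type*} [NormedAddCommGroup E] {p : ℝ}
    (hp : 0 < p) {g : α → E} (hg : MemLp g (ENNReal.ofReal p) μ) :
    eLpNorm g (ENNReal.ofReal p) μ = ENNReal.ofReal ((∫ x, ‖g x‖ ^ p ∂μ) ^ (1 / p)) := by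
  rw [hg.eLpNorm_eq_integral_rpow_norm (by simpa) ENNReal.ofReal_ne_top,
    ENNReal.toReal_ofReal hp.le, one_div]

theorem eLpNorm_const_mul_ennreal (c p : ℝ≥0∞) {G : α → ℝ≥0∞} (hG : Measurable G) :
    eLpNorm (fun a => c * G a) p μ = c * eLpNorm G p μ := by
  rcases eq_or_ne p 0 with rfl | hp₀
  · simp
  rcases eq_or_ne p ∞ with rfl | hp
  · simpa [eLpNormEssSup] using ENNReal.essSup_const_mul
  · have := ENNReal.toReal_pos hp₀ hp
    simp only [eLpNorm_eq_lintegral_rpow_enorm_toReal hp₀ hp, enorm_eq_self,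
      ENNReal.mul_rpow_of_nonneg _ _ this.le]
    rw [lintegral_const_mul _ (hG.pow_const _), ENNReal.mul_rpow_of_nonneg _ _ (by positivity),
      one_div, ENNReal.rpow_rpow_inv this.ne']

theorem eLpNorm_lintegral_mul_comp_le [SFinite μ] [SFinite ν] {p : ℝ≥0∞} (hp : 1 ≤ p)
    {k : β → ℝ≥0∞} (hk : Measurable k) {G : α → ℝ≥0∞} (hG : Measurable G) {T : β → α → α}
    (hT : Measurable (Function.uncurry T)) (hTμ : ∀ b, MeasurePreserving (T b) μ μ) :
    eLpNorm (fun a => ∫⁻ b, k b * G (T b a) ∂ν) p μ ≤ (∫⁻ b, k b ∂ν) * eLpNorm G p μ := by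
  have hint : Measurable (Function.uncurry fun b a => k b * G (T b a)) :=
    (hk.comp measurable_fst).mul (hG.comp hT)
  have hT_meas (b : β) : Measurable fun a => G (T b a) := hG.comp (hTμ b).measurable
  calc eLpNorm (fun a => ∫⁻ b, k b * G (T b a) ∂ν) p μ
      ≤ ∫⁻ b, eLpNorm (fun a => k b * G (T b a)) p μ ∂ν :=
        eLpNorm_lintegral_le_lintegral_eLpNorm hp hint
    _ = ∫⁻ b, k b * eLpNorm G p μ ∂ν := by
        congr! 2 with b
        rw [eLpNorm_const_mul_ennreal _ _ (hT_meas b)]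
        congr 1
        exact eLpNorm_comp_measurePreserving hG.aestronglyMeasurable (hTμ b)
    _ = _ := lintegral_mul_const _ hk

end MixedNorms

section Hardy

open Set
open scoped ENNReal

/-- The power weight `s ^ σ ds` on `(0, ∞)`. The norms `∫ |B(s)|^q s^{q/2-1} ds` of the
`g`-function are `L_q` norms for this measure, which is homogeneous under dilations. -/
noncomputable def powMeasure (σ : ℝ) : Measure ℝ :=
  (volume.restrict (Ioi 0)).withDensity fun s => ENNReal.ofReal (s ^ σ)

instance (σ : ℝ) : SFinite (powMeasure σ) := by unfold powMeasure; infer_instance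

theorem lintegral_powMeasure (σ : ℝ) (f : ℝ → ℝ≥0∞) :
    ∫⁻ s, f s ∂powMeasure σ = ∫⁻ s in Ioi 0, ENNReal.ofReal (s ^ σ) * f s :=
  lintegral_withDensity_eq_lintegral_mul_non_measurable _ (by fun_prop)
    (.of_forall fun _ => ENNReal.ofReal_lt_top) f

theorem ae_powMeasure_pos (σ : ℝ) : ∀ᵐ s ∂powMeasure σ, 0 < s :=
  (withDensity_absolutelyContinuous _ _).ae_le (ae_restrict_mem measurableSet_Ioi)

theorem eLpNorm_powMeasure {q : ℝ} (hq : 0 < q) (σ : ℝ) (B : ℝ → ℝ≥0∞) :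
    eLpNorm B (ENNReal.ofReal q) (powMeasure σ) =
      (∫⁻ s in Ioi 0, ENNReal.ofReal (s ^ σ) * B s ^ q) ^ (1 / q) := by
  rw [eLpNorm_eq_lintegral_rpow_enorm_toReal (by simpa) ENNReal.ofReal_ne_top,
    ENNReal.toReal_ofReal hq.le, lintegral_powMeasure]
  simp only [enorm_eq_self]

theorem setLIntegral_Ioi_comp_mul_left {v : ℝ} (hv : 0 < v) (f : ℝ → ℝ≥0∞) :
    ENNReal.ofReal v * ∫⁻ s in Ioi (0 : ℝ), f (v * s) = ∫⁻ s in Ioi (0 : ℝ), f s := by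
  have hemb : MeasurableEmbedding (v * · : ℝ → ℝ) :=
    (Homeomorph.mulLeft₀ v hv.ne').measurableEmbedding
  have hpre : (v * · : ℝ → ℝ) ⁻¹' Ioi 0 = Ioi 0 := by simp [preimage_const_mul_Ioi₀ _ hv]
  nth_rw 2 [← Real.smul_map_volume_mul_left hv.ne']
  rw [Measure.restrict_smul, lintegral_smul_measure, hemb.restrict_map, hemb.lintegral_map, hpre,
    abs_of_pos hv, smul_eq_mul]

theorem map_mul_left_powMeasure (σ : ℝ) {v : ℝ} (hv : 0 < v) :
    (powMeasure σ).map (v * ·) = ENNReal.ofReal (v ^ (-(σ + 1))) • powMeasure σ := by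
  refine Measure.ext_of_lintegral _ fun f hf => ?_
  rw [lintegral_map hf (by fun_prop), lintegral_smul_measure, lintegral_powMeasure,
    lintegral_powMeasure, ← setLIntegral_Ioi_comp_mul_left hv fun s => ENNReal.ofReal (s ^ σ) * f s,
    smul_eq_mul, ← mul_assoc, ← ENNReal.ofReal_mul (by positivity),
    ← lintegral_const_mul' _ _ ENNReal.ofReal_ne_top]
  refine setLIntegral_congr_fun measurableSet_Ioi fun s (hs : 0 < s) => ?_
  rw [← mul_assoc, ← ENNReal.ofReal_mul (by positivity), Real.mul_rpow hv.le hs.le, neg_add,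
    Real.rpow_add hv, Real.rpow_neg_one, Real.rpow_neg hv.le]
  congr 2
  field_simp

theorem eLpNorm_comp_mul_left_powMeasure (σ : ℝ) {v : ℝ} (hv : 0 < v) (q : ℝ≥0∞) (B : ℝ → ℝ≥0∞) :
    eLpNorm (fun s => B (v * s)) q (powMeasure σ) =
      ENNReal.ofReal (v ^ (-((σ + 1) / q.toReal))) * eLpNorm B q (powMeasure σ) := by
  have hemb : MeasurableEmbedding (v * · : ℝ → ℝ) :=
    (Homeomorph.mulLeft₀ v hv.ne').measurableEmbedding
  have hv' : ENNReal.ofReal (v ^ (-(σ + 1))) ≠ 0 := by simp [Real.rpow_pos_of_pos hv]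
  change eLpNorm (B ∘ (v * ·)) q _ = _
  rw [← hemb.eLpNorm_map_measure, map_mul_left_powMeasure σ hv,
    eLpNorm_smul_measure_of_ne_zero hv', smul_eq_mul,
    ENNReal.ofReal_rpow_of_pos (by positivity), ← Real.rpow_mul hv.le, ENNReal.toReal_div,
    ENNReal.toReal_one, neg_mul, mul_one_div]

theorem eLpNorm_lintegral_mul_comp_mul_le (σ : ℝ) {q : ℝ≥0∞} (hq : 1 ≤ q) {K B : ℝ → ℝ≥0∞}
    (hK : Measurable K) (hB : Measurable B) :
    eLpNorm (fun s => ∫⁻ v in Ioi 0, K v * B (v * s)) q (powMeasure σ) ≤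
      (∫⁻ v in Ioi 0, K v * ENNReal.ofReal (v ^ (-((σ + 1) / q.toReal)))) *
        eLpNorm B q (powMeasure σ) := by
  calc eLpNorm (fun s => ∫⁻ v in Ioi 0, K v * B (v * s)) q (powMeasure σ)
      ≤ ∫⁻ v in Ioi 0, eLpNorm (fun s => K v * B (v * s)) q (powMeasure σ) :=
        eLpNorm_lintegral_le_lintegral_eLpNorm hq
          ((hK.comp measurable_fst).mul (hB.comp measurable_mul))
    _ = ∫⁻ v in Ioi 0, K v * ENNReal.ofReal (v ^ (-((σ + 1) / q.toReal))) *
          eLpNorm B q (powMeasure σ) :=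
        setLIntegral_congr_fun measurableSet_Ioi fun v hv => by
          rw [eLpNorm_const_mul_ennreal _ _ (by fun_prop),
            eLpNorm_comp_mul_left_powMeasure σ hv, mul_assoc]
    _ = _ := lintegral_mul_const _ (by fun_prop)

/-- The kernel for which the vertical increment of size `s` is at most
`s * ∫⁻ v in Ioi 0, verticalKernel v * B (v * s)`, where `B t` is the norm of `Q_t * f`. -/
noncomputable def verticalKernel (v : ℝ) : ℝ≥0∞ :=
  (Iio 1).indicator 2 v + (Ioi (1 / 2)).indicator (fun v => ENNReal.ofReal (2 / v)) v

theorem measurable_verticalKernel : Measurable verticalKernel :=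
  (measurable_const.indicator measurableSet_Iio).add
    (Measurable.indicator (by fun_prop) measurableSet_Ioi)

theorem lintegral_Ioo_zero_rpow {r c : ℝ} (hr : -1 < r) (hc : 0 ≤ c) :
    ∫⁻ v in Ioo 0 c, ENNReal.ofReal (v ^ r) = ENNReal.ofReal (c ^ (r + 1) / (r + 1)) := by
  rw [setLIntegral_congr Ioo_ae_eq_Ioc, ← ofReal_integral_eq_lintegral_ofReal,
    ← intervalIntegral.integral_of_le hc, integral_rpow (.inl hr),
    Real.zero_rpow (by linarith), sub_zero]
  · exact (intervalIntegrable_iff_integrableOn_Ioc_of_le hc).1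
      (intervalIntegral.intervalIntegrable_rpow' hr)
  · filter_upwards [ae_restrict_mem measurableSet_Ioc] with v hv using Real.rpow_nonneg hv.1.le r

theorem lintegral_Ioi_rpow {r c : ℝ} (hr : r < -1) (hc : 0 < c) :
    ∫⁻ v in Ioi c, ENNReal.ofReal (v ^ r) = ENNReal.ofReal (-c ^ (r + 1) / (r + 1)) := by
  rw [← ofReal_integral_eq_lintegral_ofReal (integrableOn_Ioi_rpow_of_lt hr hc),
    integral_Ioi_rpow_of_lt hr hc]
  filter_upwards [ae_restrict_mem measurableSet_Ioi] with v hv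
    using Real.rpow_nonneg (hc.trans hv).le r

theorem lintegral_verticalKernel_mul_rpow :
    ∫⁻ v in Ioi 0, verticalKernel v * ENNReal.ofReal (v ^ (-(1 / 2) : ℝ)) =
      ENNReal.ofReal (4 + 4 * √2) := by
  have hsplit : ∀ v ∈ Ioi (0 : ℝ), verticalKernel v * ENNReal.ofReal (v ^ (-(1 / 2) : ℝ)) =
      2 * ((Iio 1).indicator (fun v => ENNReal.ofReal (v ^ (-(1 / 2) : ℝ))) v +
        (Ioi (1 / 2)).indicator (fun v => ENNReal.ofReal (v ^ (-(3 / 2) : ℝ))) v) := by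
    intro v (hv : 0 < v)
    have hpow : ENNReal.ofReal (2 / v) * ENNReal.ofReal (v ^ (-(1 / 2) : ℝ)) =
        2 * ENNReal.ofReal (v ^ (-(3 / 2) : ℝ)) := by
      rw [div_eq_mul_inv, ENNReal.ofReal_mul zero_le_two, ENNReal.ofReal_ofNat, mul_assoc,
        ← ENNReal.ofReal_mul (inv_nonneg.2 hv.le), ← Real.rpow_neg_one, ← Real.rpow_add hv]
      norm_num
    simp only [verticalKernel, indicator_apply, add_mul, mul_add, mul_ite, ite_mul, zero_mul,
      mul_zero, Pi.ofNat_apply, hpow]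
  have hnear : ∫⁻ v in Ioo (0 : ℝ) 1, ENNReal.ofReal (v ^ (-(1 / 2) : ℝ)) =
      ENNReal.ofReal 2 := by
    rw [lintegral_Ioo_zero_rpow (by norm_num) zero_le_one, Real.one_rpow]
    norm_num
  have hfar : ∫⁻ v in Ioi (1 / 2 : ℝ), ENNReal.ofReal (v ^ (-(3 / 2) : ℝ)) =
      ENNReal.ofReal (2 * √2) := by
    rw [lintegral_Ioi_rpow (by norm_num) (by norm_num),
      show (-(3 / 2) + 1 : ℝ) = -(1 / 2) by norm_num, one_div 2,
      Real.inv_rpow zero_le_two, Real.rpow_neg zero_le_two, inv_inv, ← one_div, ← Real.sqrt_eq_rpow]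
    congr 1
    ring
  rw [setLIntegral_congr_fun measurableSet_Ioi hsplit, lintegral_const_mul' _ _ (by simp),
    lintegral_add_left (Measurable.indicator (by fun_prop) measurableSet_Iio),
    setLIntegral_indicator measurableSet_Iio, setLIntegral_indicator measurableSet_Ioi,
    Iio_inter_Ioi, Ioi_inter_Ioi, sup_eq_left.2 (by norm_num), hnear, hfar,
    ← ENNReal.ofReal_add (by positivity) (by positivity), ← ENNReal.ofReal_ofNat 2,
    ← ENNReal.ofReal_mul zero_le_two]
  congr 1
  ring

theorem lintegral_verticalKernel_mul_comp_mul {s : ℝ} (hs : 0 < s) {B : ℝ → ℝ≥0∞}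
    (hB : Measurable B) :
    ENNReal.ofReal s * ∫⁻ v in Ioi 0, verticalKernel v * B (v * s) =
      2 * (∫⁻ r in Ioo 0 s, B r) + ∫⁻ r in Ioi (s / 2), ENNReal.ofReal (2 * s / r) * B r := by
  have hsplit : ∀ r, verticalKernel (r / s) * B r =
      (Iio s).indicator (fun r => 2 * B r) r +
        (Ioi (s / 2)).indicator (fun r => ENNReal.ofReal (2 * s / r) * B r) r := by
    intro r
    simp only [verticalKernel, indicator_apply, add_mul, ite_mul, zero_mul, mem_Iio, mem_Ioi,
      Pi.ofNat_apply, div_lt_one hs, lt_div_iff₀ hs, one_div_mul_eq_div, div_div_eq_mul_div]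
  calc ENNReal.ofReal s * ∫⁻ v in Ioi 0, verticalKernel v * B (v * s)
      = ∫⁻ r in Ioi 0, verticalKernel (r / s) * B r := by
        rw [← setLIntegral_Ioi_comp_mul_left hs fun r => verticalKernel (r / s) * B r]
        simp only [mul_comm s, mul_div_cancel_right₀ _ hs.ne']
    _ = _ := by
        simp_rw [hsplit]
        rw [lintegral_add_left ((hB.const_mul 2).indicator measurableSet_Iio),
          setLIntegral_indicator measurableSet_Iio, setLIntegral_indicator measurableSet_Ioi,
          Iio_inter_Ioi, Ioi_inter_Ioi, sup_eq_left.2 (by positivity), lintegral_const_mul _ hB]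

end Hardy

section Calculus

open Set Filter Topology
open scoped Convolution ENNReal

theorem integrable_exp_neg_mul_abs {c : ℝ} (hc : 0 < c) :
    Integrable fun v : ℝ => Real.exp (-(c * |v|)) := by
  have hIoi : IntegrableOn (fun v : ℝ => Real.exp (-(c * |v|))) (Ioi 0) :=
    (integrableOn_exp_mul_Ioi (neg_neg_of_pos hc) 0).congr_fun
      (fun v (hv : 0 < v) => by simp only [abs_of_pos hv, neg_mul]) measurableSet_Ioi
  have hIic : IntegrableOn (fun v : ℝ => Real.exp (-(c * |v|))) (Iic 0) :=
    (integrableOn_exp_mul_Iic hc 0).congr_fun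
      (fun v (hv : v ≤ 0) => by simp only [abs_of_nonpos hv, mul_neg, neg_neg]) measurableSet_Iic
  simpa using hIic.union hIoi

variable {X : Type*} [NormedAddCommGroup X] [NormedSpace ℝ X]

theorem enorm_sub_le_lintegral_Ioo_enorm [CompleteSpace X] {g g' : ℝ → X} {a b : ℝ} {ga gb : X}
    (hab : a < b) (hderiv : ∀ x ∈ Ioo a b, HasDerivAt g (g' x) x)
    (ha : Tendsto g (𝓝[>] a) (𝓝 ga)) (hb : Tendsto g (𝓝[<] b) (𝓝 gb)) :
    ‖gb - ga‖ₑ ≤ ∫⁻ x in Ioo a b, ‖g' x‖ₑ := by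
  rcases eq_or_ne (∫⁻ x in Ioo a b, ‖g' x‖ₑ) ∞ with htop | htop
  · exact htop ▸ le_top
  have hmeas : AEStronglyMeasurable g' (volume.restrict (Ioo a b)) :=
    (stronglyMeasurable_deriv g).aestronglyMeasurable.congr <|
      (ae_restrict_mem measurableSet_Ioo).mono fun x hx => (hderiv x hx).deriv
  have hint : IntervalIntegrable g' volume a b :=
    (intervalIntegrable_iff_integrableOn_Ioo_of_le hab.le).2 ⟨hmeas, htop.lt_top⟩
  rw [← intervalIntegral.integral_eq_sub_of_hasDerivAt_of_tendsto hab hderiv hint ha hb,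
    intervalIntegral.integral_of_le hab.le, integral_Ioc_eq_integral_Ioo]
  exact enorm_integral_le_lintegral_enorm _

theorem enorm_sub_le_lintegral_Ioi_enorm [CompleteSpace X] {g g' : ℝ → X} {a : ℝ} {m : X}
    (hderiv : ∀ x ∈ Ici a, HasDerivAt g (g' x) x) (hm : Tendsto g atTop (𝓝 m)) :
    ‖m - g a‖ₑ ≤ ∫⁻ x in Ioi a, ‖g' x‖ₑ := by
  rcases eq_or_ne (∫⁻ x in Ioi a, ‖g' x‖ₑ) ∞ with htop | htop
  · exact htop ▸ le_top
  have hmeas : AEStronglyMeasurable g' (volume.restrict (Ioi a)) :=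
    (stronglyMeasurable_deriv g).aestronglyMeasurable.congr <|
      (ae_restrict_mem measurableSet_Ioi).mono fun x hx => (hderiv x (Ioi_subset_Ici_self hx)).deriv
  rw [← integral_Ioi_of_hasDerivAt_of_tendsto' hderiv ⟨hmeas, htop.lt_top⟩ hm]
  exact enorm_integral_le_lintegral_enorm _

theorem enorm_convolution_add_sub_le {k : ℝ → ℝ} {ψ : ℝ → X}
    (hk : ConvolutionExists k ψ (ContinuousLinearMap.lsmul ℝ ℝ)) (x s : ℝ) :
    ‖(k ⋆ ψ) (x + s) - (k ⋆ ψ) x‖ₑ ≤ ∫⁻ w, ‖k (w + s) - k w‖ₑ * ‖ψ (x - w)‖ₑ := by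
  have hshift : (k ⋆ ψ) (x + s) = ∫ w, k (w + s) • ψ (x - w) := by
    rw [convolution_lsmul, ← integral_add_right_eq_self _ s]
    simp only [add_sub_add_right_eq_sub]
  have hint : Integrable fun w => k w • ψ (x - w) := hk x
  have hint_shift : Integrable fun w => k (w + s) • ψ (x - w) := by
    simpa using (hk (x + s)).integrable.comp_add_right s
  rw [hshift, convolution_lsmul, ← integral_sub hint_shift hint]
  refine (enorm_integral_le_lintegral_enorm _).trans_eq ?_
  simp only [← sub_smul, enorm_smul]

end Calculus

namespace HR

section PoissonKernel

open Set Filter Topology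
open scoped Convolution FourierTransform ENNReal

theorem Pker_nonneg {t : ℝ} (ht : 0 < t) (u : ℝ) : 0 ≤ Pker t u := by
  unfold Pker; positivity

theorem Pker_eq_cauchyPDFReal {t : ℝ} (ht : 0 < t) :
    Pker t = ProbabilityTheory.cauchyPDFReal 0 t.toNNReal := by
  ext u
  simp only [Pker, ProbabilityTheory.cauchyPDFReal_def, sub_zero, Real.coe_toNNReal _ ht.le]
  rw [add_comm (t ^ 2)]
  field_simp

theorem integrable_Pker {t : ℝ} (ht : 0 < t) : Integrable (Pker t) := by
  rw [Pker_eq_cauchyPDFReal ht]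
  exact ProbabilityTheory.integrable_cauchyPDFReal 0

theorem integral_Pker {t : ℝ} (ht : 0 < t) : ∫ u, Pker t u = 1 := by
  rw [Pker_eq_cauchyPDFReal ht]
  exact ProbabilityTheory.integral_cauchyPDFReal_eq_one 0 (by simpa using ht)

theorem continuous_Pker {t : ℝ} (ht : 0 < t) : Continuous (Pker t) := by
  unfold Pker
  exact continuous_const.div (by fun_prop) fun u => by positivity

theorem measurable_Pker : Measurable (Function.uncurry Pker) := by
  unfold Pker Function.uncurry; fun_prop

theorem measurable_Qker : Measurable (Function.uncurry Qker) := by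
  unfold Qker Function.uncurry; fun_prop

theorem norm_Pker_le {t : ℝ} (ht : 0 < t) (u : ℝ) : ‖Pker t u‖ ≤ 1 / (Real.pi * t) := by
  rw [Real.norm_of_nonneg (Pker_nonneg ht u), Pker, div_le_div_iff₀ (by positivity) (by positivity)]
  nlinarith [Real.pi_pos, mul_nonneg Real.pi_pos.le (sq_nonneg u)]

theorem fourier_exp_neg_mul_abs {t : ℝ} (ht : 0 < t) :
    𝓕 (fun v : ℝ => (Real.exp (-(2 * Real.pi * t * |v|)) : ℂ)) = fun u => (Pker t u : ℂ) := by
  ext u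
  have hleft : 0 < (2 * Real.pi * (t - u * Complex.I)).re := by simp [Real.pi_pos, ht]
  have hright : (-2 * Real.pi * (t + u * Complex.I)).re < 0 := by simp [Real.pi_pos, ht]
  have hsub : (t - u * Complex.I : ℂ) ≠ 0 := fun h => by simp [h] at hleft
  have hadd : (t + u * Complex.I : ℂ) ≠ 0 := fun h => by simp [h] at hright
  have hleft_eq : ∀ v ∈ Iic (0 : ℝ), Complex.exp (↑(-2 * Real.pi * v * u) * Complex.I) •
      (Real.exp (-(2 * Real.pi * t * |v|)) : ℂ) =
        Complex.exp (2 * Real.pi * (t - u * Complex.I) * v) := by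
    intro v (hv : v ≤ 0)
    rw [abs_of_nonpos hv, smul_eq_mul, Complex.ofReal_exp, ← Complex.exp_add]
    push_cast
    ring_nf
  have hright_eq : ∀ v ∈ Ioi (0 : ℝ), Complex.exp (↑(-2 * Real.pi * v * u) * Complex.I) •
      (Real.exp (-(2 * Real.pi * t * |v|)) : ℂ) =
        Complex.exp (-2 * Real.pi * (t + u * Complex.I) * v) := by
    intro v (hv : 0 < v)
    rw [abs_of_pos hv, smul_eq_mul, Complex.ofReal_exp, ← Complex.exp_add]
    push_cast
    ring_nf
  rw [Real.fourier_real_eq_integral_exp_smul, ← intervalIntegral.integral_Iic_add_Ioi (b := 0)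
    ((integrableOn_exp_mul_complex_Iic hleft 0).congr_fun (fun v hv => (hleft_eq v hv).symm)
      measurableSet_Iic)
    ((integrableOn_exp_mul_complex_Ioi hright 0).congr_fun (fun v hv => (hright_eq v hv).symm)
      measurableSet_Ioi),
    setIntegral_congr_fun measurableSet_Iic hleft_eq,
    setIntegral_congr_fun measurableSet_Ioi hright_eq,
    integral_exp_mul_complex_Iic hleft, integral_exp_mul_complex_Ioi hright]
  have hsq : (t ^ 2 + u ^ 2 : ℂ) = (t - u * Complex.I) * (t + u * Complex.I) := by
    linear_combination u ^ 2 * Complex.I_sq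
  simp only [Pker, Complex.ofReal_zero, mul_zero, Complex.exp_zero]
  push_cast
  rw [hsq]
  field_simp
  ring

theorem fourier_Pker {t : ℝ} (ht : 0 < t) :
    𝓕 (fun u : ℝ => (Pker t u : ℂ)) = fun v => (Real.exp (-(2 * Real.pi * t * |v|)) : ℂ) := by
  have hinv := Continuous.fourierInv_fourier_eq
    (f := fun v : ℝ => (Real.exp (-(2 * Real.pi * t * |v|)) : ℂ)) (by fun_prop)
    (integrable_exp_neg_mul_abs (by positivity)).ofReal
    (by rw [fourier_exp_neg_mul_abs ht]; exact (integrable_Pker ht).ofReal)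
  rw [fourier_exp_neg_mul_abs ht] at hinv
  ext v
  simpa [Real.fourierInv_eq_fourier_neg] using congrFun hinv (-v)

theorem fourier_Pker_convolution_Pker {a b : ℝ} (ha : 0 < a) (hb : 0 < b) :
    𝓕 (fun u : ℝ => ((Pker a ⋆ Pker b) u : ℂ)) = 𝓕 (fun u : ℝ => (Pker (a + b) u : ℂ)) := by
  have hcomplex : (fun u : ℝ => ((Pker a ⋆ Pker b) u : ℂ)) =
      (fun u => (Pker a u : ℂ)) ⋆[ContinuousLinearMap.lsmul ℂ ℂ] fun u => (Pker b u : ℂ) := by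
    ext u
    rw [convolution_lsmul, convolution_lsmul, ← integral_complex_ofReal]
    simp
  have hint {t : ℝ} (ht : 0 < t) : Integrable fun u => (Pker t u : ℂ) := (integrable_Pker ht).ofReal
  ext v
  rw [hcomplex, Real.fourier_smul_convolution_eq (hint ha) (hint hb), fourier_Pker ha,
    fourier_Pker hb, fourier_Pker (add_pos ha hb), smul_eq_mul, ← Complex.ofReal_mul,
    ← Real.exp_add]
  ring_nf

theorem Pker_convolution_Pker {a b : ℝ} (ha : 0 < a) (hb : 0 < b) :
    Pker a ⋆ Pker b = Pker (a + b) := by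
  have hab := add_pos ha hb
  have hcont : Continuous (Pker a ⋆ Pker b) :=
    BddAbove.continuous_convolution_right_of_integrable _
      ⟨_, forall_mem_range.2 (norm_Pker_le hb)⟩ (integrable_Pker ha) (continuous_Pker hb)
  have hfourier_int : Integrable (𝓕 (fun u : ℝ => (Pker (a + b) u : ℂ))) := by
    rw [fourier_Pker hab]
    exact (integrable_exp_neg_mul_abs (by positivity)).ofReal
  have hinv : 𝓕⁻ (𝓕 fun u : ℝ => (Pker (a + b) u : ℂ)) = fun u => (Pker (a + b) u : ℂ) :=
    (Complex.continuous_ofReal.comp (continuous_Pker hab)).fourierInv_fourier_eq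
      (integrable_Pker hab).ofReal hfourier_int
  have hinv_conv : 𝓕⁻ (𝓕 fun u : ℝ => ((Pker a ⋆ Pker b) u : ℂ)) =
      fun u => ((Pker a ⋆ Pker b) u : ℂ) :=
    (Complex.continuous_ofReal.comp hcont).fourierInv_fourier_eq
      ((integrable_Pker ha).integrable_convolution _ (integrable_Pker hb)).ofReal
      (fourier_Pker_convolution_Pker ha hb ▸ hfourier_int)
  rw [fourier_Pker_convolution_Pker ha hb, hinv] at hinv_conv
  ext u
  exact_mod_cast (congrFun hinv_conv u).symm

variable {X : Type*} [NormedAddCommGroup X] [NormedSpace ℝ X]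

theorem norm_Qker_le {t : ℝ} (ht : 0 < t) (u : ℝ) : ‖Qker t u‖ ≤ Pker t u / t := by
  have hnum : |u ^ 2 - t ^ 2| ≤ t ^ 2 + u ^ 2 := by
    rw [abs_le]; constructor <;> nlinarith [sq_nonneg u, sq_nonneg t]
  calc ‖Qker t u‖ = |u ^ 2 - t ^ 2| / (Real.pi * (t ^ 2 + u ^ 2) ^ 2) := by
        rw [Qker, norm_div, Real.norm_eq_abs, Real.norm_of_nonneg (by positivity)]
    _ ≤ (t ^ 2 + u ^ 2) / (Real.pi * (t ^ 2 + u ^ 2) ^ 2) := by gcongr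
    _ = Pker t u / t := by unfold Pker; field_simp

theorem Pker_div_le_Pker_div {c t : ℝ} (hc : 0 < c) (hct : c ≤ t) (u : ℝ) :
    Pker t u / t ≤ Pker c u / c := by
  have hdiv {s : ℝ} (hs : 0 < s) : Pker s u / s = 1 / (Real.pi * (s ^ 2 + u ^ 2)) := by
    unfold Pker; field_simp
  rw [hdiv hc, hdiv (hc.trans_le hct)]
  gcongr

theorem integrable_Qker {t : ℝ} (ht : 0 < t) : Integrable (Qker t) :=
  ((integrable_Pker ht).div_const t).mono'
    measurable_Qker.of_uncurry_left.aestronglyMeasurable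
    (.of_forall (norm_Qker_le ht))

theorem hasDerivAt_Pker {t : ℝ} (ht : 0 < t) (u : ℝ) :
    HasDerivAt (fun t => Pker t u) (Qker t u) t := by
  refine ((hasDerivAt_id' t).fun_div (((hasDerivAt_pow 2 t).add_const (u ^ 2)).const_mul Real.pi)
    (by positivity)).congr_deriv ?_
  simp only [Qker]
  field_simp
  ring

theorem convolutionExists_Pker {φ : ℝ → X} (hφ : Integrable φ) {t : ℝ} (ht : 0 < t) :
    ConvolutionExists (Pker t) φ (ContinuousLinearMap.lsmul ℝ ℝ) := fun x =>
  (hφ.comp_sub_left x).bdd_smul _ (continuous_Pker ht).aestronglyMeasurable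
    (.of_forall (norm_Pker_le ht))

theorem hasDerivAt_Pker_convolution {φ : ℝ → X} (hφ : Integrable φ) (x : ℝ) {t : ℝ} (ht : 0 < t) :
    HasDerivAt (fun t => (Pker t ⋆ φ) x) ((Qker t ⋆ φ) x) t := by
  have ht₂ : 0 < t / 2 := half_pos ht
  have hφx := (hφ.comp_sub_left x).aestronglyMeasurable
  have hbound (u r : ℝ) (hr : r ∈ Ioi (t / 2)) :
      ‖Qker r u • φ (x - u)‖ ≤ ‖Pker (t / 2) u • φ (x - u)‖ / (t / 2) := by
    rw [norm_smul, norm_smul, Real.norm_of_nonneg (Pker_nonneg ht₂ u), mul_div_right_comm]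
    gcongr
    exact (norm_Qker_le (ht₂.trans hr) u).trans (Pker_div_le_Pker_div ht₂ hr.le u)
  exact (hasDerivAt_integral_of_dominated_loc_of_deriv_le
    (F := fun t u => Pker t u • φ (x - u)) (Ioi_mem_nhds (half_lt_self ht))
    (.of_forall fun r =>
      measurable_Pker.of_uncurry_left.aestronglyMeasurable.smul hφx)
    (convolutionExists_Pker hφ ht x)
    (measurable_Qker.of_uncurry_left.aestronglyMeasurable.smul hφx)
    (.of_forall hbound) ((convolutionExists_Pker hφ ht₂ x).norm.div_const _)
    (.of_forall fun u r hr => (hasDerivAt_Pker (ht₂.trans hr) u).smul_const _)).2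

theorem Pker_convolution_Qker {a b : ℝ} (ha : 0 < a) (hb : 0 < b) :
    Pker a ⋆ Qker b = Qker (a + b) := by
  ext x
  have hderiv : HasDerivAt (fun t => (Pker t ⋆ Pker a) x) (Qker (a + b) x) b :=
    ((hasDerivAt_Pker (add_pos ha hb) x).comp_const_add a b).congr_of_eventuallyEq <| by
      filter_upwards [Ioi_mem_nhds hb] with t ht
      rw [Pker_convolution_Pker ht ha, add_comm]
  rw [← (hasDerivAt_Pker_convolution (integrable_Pker ha) x hb).unique hderiv,
    convolution_lsmul_swap, convolution_lsmul]
  simp only [smul_eq_mul, mul_comm]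

theorem Qker_add_convolution [CompleteSpace X] {φ : ℝ → X} (hφ : Integrable φ) {a b : ℝ}
    (ha : 0 < a) (hb : 0 < b) : Qker (a + b) ⋆ φ = Pker a ⋆ (Qker b ⋆ φ) := by
  have hQφ : Integrable ((fun u => ‖Qker b u‖) ⋆[ContinuousLinearMap.mul ℝ ℝ] fun u => ‖φ u‖) :=
    (integrable_Qker hb).norm.integrable_convolution _ hφ.norm
  rw [← Pker_convolution_Qker ha hb]
  ext x
  refine convolution_assoc _ _ _ _ (fun u v w => ?_)
    (integrable_Pker ha).aestronglyMeasurable (integrable_Qker hb).aestronglyMeasurable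
    hφ.aestronglyMeasurable (.of_forall (convolutionExists_Pker (integrable_Qker hb) ha))
    ?_ ?_
  · simp only [ContinuousLinearMap.lsmul_apply, smul_assoc]
  · exact (integrable_Qker hb).norm.ae_convolution_exists _ hφ.norm
  · exact (hQφ.comp_sub_left x).bdd_mul (continuous_Pker ha).norm.aestronglyMeasurable
      (.of_forall fun u => by simpa using norm_Pker_le ha u)

theorem tendsto_Pker_convolution_nhdsGT_zero [CompleteSpace X] {φ : ℝ → X} (hφ : Integrable φ)
    {x : ℝ} (hx : ContinuousAt φ x) : Tendsto (fun t => (Pker t ⋆ φ) x) (𝓝[>] 0) (𝓝 (φ x)) := by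
  have hdecay : Tendsto (fun u : ℝ => ‖u‖ ^ Module.finrank ℝ ℝ * Pker 1 u)
      (Bornology.cobounded ℝ) (𝓝 0) := by
    refine squeeze_zero (fun u => mul_nonneg (by positivity) (Pker_nonneg one_pos u)) (fun u => ?_)
      (tendsto_inv_atTop_zero.comp tendsto_norm_cobounded_atTop)
    rcases eq_or_ne u 0 with rfl | hu
    · simp
    simp only [Module.finrank_self, pow_one, Pker, one_pow, mul_one_div, Function.comp_apply]
    rw [← one_div, div_le_div_iff₀ (by positivity) (norm_pos_iff.2 hu), Real.norm_eq_abs,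
      abs_mul_abs_self]
    nlinarith [Real.pi_gt_three, sq_nonneg u]
  refine ((tendsto_integral_comp_smul_smul_of_integrable' (Pker_nonneg one_pos)
    (integral_Pker one_pos) hdecay hφ hx).comp tendsto_inv_nhdsGT_zero).congr' ?_
  filter_upwards [self_mem_nhdsWithin] with t (ht : 0 < t)
  rw [convolution_lsmul_swap]
  refine integral_congr_ae (.of_forall fun u => ?_)
  simp only [Pker, Module.finrank_self, pow_one, smul_eq_mul]
  congr 1
  field_simp

theorem tendsto_Pker_convolution_atTop {φ : ℝ → X} (hφ : Integrable φ) (x : ℝ) :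
    Tendsto (fun t => (Pker t ⋆ φ) x) atTop (𝓝 0) := by
  refine squeeze_zero_norm' (a := fun t => (∫ u, ‖φ (x - u)‖) / Real.pi / t) ?_
    (tendsto_const_nhds.div_atTop tendsto_id)
  filter_upwards [eventually_gt_atTop 0] with t ht
  rw [convolution_lsmul, div_div, div_eq_mul_one_div, mul_comm, ← integral_const_mul]
  refine norm_integral_le_of_norm_le ((hφ.comp_sub_left x).norm.const_mul _)
    (.of_forall fun u => ?_)
  rw [norm_smul]
  gcongr
  exact norm_Pker_le ht u

theorem enorm_Pker_convolution_sub_le [CompleteSpace X] {φ : ℝ → X} (hφ : Integrable φ)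
    {x : ℝ} (hx : ContinuousAt φ x) {s : ℝ} (hs : 0 < s) :
    ‖(Pker s ⋆ φ) x - φ x‖ₑ ≤ ∫⁻ r in Ioo 0 s, ‖(Qker r ⋆ φ) x‖ₑ :=
  enorm_sub_le_lintegral_Ioo_enorm hs (fun _ hr => hasDerivAt_Pker_convolution hφ x hr.1)
    (tendsto_Pker_convolution_nhdsGT_zero hφ hx)
    (hasDerivAt_Pker_convolution hφ x hs).continuousAt.continuousWithinAt

theorem enorm_Pker_convolution_add_sub_le [CompleteSpace X] {φ : ℝ → X} (hφ : Integrable φ)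
    (x : ℝ) {s : ℝ} (hs : 0 < s) :
    ‖(Pker s ⋆ φ) (x + s) - (Pker s ⋆ φ) x‖ₑ ≤ ∫⁻ a in Ioi (s / 2),
      2 * ∫⁻ w, ‖Pker a (w + s) - Pker a w‖ₑ * ‖(Qker a ⋆ φ) (x - w)‖ₑ := by
  have hderiv (y : ℝ) : ∀ a ∈ Ici (s / 2),
      HasDerivAt (fun a => (Pker (2 * a) ⋆ φ) y) ((2 : ℝ) • (Qker (2 * a) ⋆ φ) y) a := by
    intro a ha
    have ha₀ : 0 < a := (half_pos hs).trans_le ha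
    simpa [Function.comp_def] using (hasDerivAt_Pker_convolution hφ y (mul_pos two_pos ha₀)).scomp a
      ((hasDerivAt_id a).const_mul 2)
  have hlim (y : ℝ) : Tendsto (fun a => (Pker (2 * a) ⋆ φ) y) atTop (𝓝 0) :=
    (tendsto_Pker_convolution_atTop hφ y).comp (tendsto_id.const_mul_atTop two_pos)
  have hftc := enorm_sub_le_lintegral_Ioi_enorm
    (fun a ha => (hderiv (x + s) a ha).sub (hderiv x a ha)) ((hlim (x + s)).sub (hlim x))
  simp only [Pi.sub_apply, mul_div_cancel₀ s two_ne_zero, sub_zero, zero_sub, enorm_neg,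
    ← smul_sub, enorm_smul, Real.enorm_eq_ofReal zero_le_two, ENNReal.ofReal_ofNat] at hftc
  refine hftc.trans (setLIntegral_mono' measurableSet_Ioi fun a ha => ?_)
  have ha₀ : 0 < a := (half_pos hs).trans ha
  have hQ : Integrable (Qker a ⋆ φ) := (integrable_Qker ha₀).integrable_convolution _ hφ
  rw [two_mul a, Qker_add_convolution hφ ha₀ ha₀]
  gcongr
  exact enorm_convolution_add_sub_le (convolutionExists_Pker hQ ha₀) x s

theorem enorm_add_sub_le_lintegral_Qker_convolution [CompleteSpace X] {φ : ℝ → X}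
    (hφ : Integrable φ) (hφc : Continuous φ) (x : ℝ) {s : ℝ} (hs : 0 < s) :
    ‖φ (x + s) - φ x‖ₑ ≤ (∫⁻ r in Ioo 0 s, ‖(Qker r ⋆ φ) (x + s)‖ₑ) +
      (∫⁻ r in Ioo 0 s, ‖(Qker r ⋆ φ) x‖ₑ) +
      ∫⁻ a in Ioi (s / 2), 2 * ∫⁻ w, ‖Pker a (w + s) - Pker a w‖ₑ * ‖(Qker a ⋆ φ) (x - w)‖ₑ := by
  have hnear (y : ℝ) := enorm_Pker_convolution_sub_le hφ (hφc.continuousAt (x := y)) hs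
  calc ‖φ (x + s) - φ x‖ₑ = ‖-((Pker s ⋆ φ) (x + s) - φ (x + s)) + ((Pker s ⋆ φ) x - φ x) +
        ((Pker s ⋆ φ) (x + s) - (Pker s ⋆ φ) x)‖ₑ := by congr 1; abel
    _ ≤ ‖(Pker s ⋆ φ) (x + s) - φ (x + s)‖ₑ + ‖(Pker s ⋆ φ) x - φ x‖ₑ +
        ‖(Pker s ⋆ φ) (x + s) - (Pker s ⋆ φ) x‖ₑ := by
      rw [← enorm_neg ((Pker s ⋆ φ) (x + s) - φ (x + s))]
      exact (enorm_add_le _ _).trans (by gcongr; exact enorm_add_le _ _)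
    _ ≤ _ := by
      gcongr ?_ + ?_ + ?_
      exacts [hnear _, hnear _, enorm_Pker_convolution_add_sub_le hφ x hs]

theorem abs_Pker_add_sub_le {a s : ℝ} (ha : 0 < a) (hs : 0 ≤ s) (u : ℝ) :
    |Pker a (u + s) - Pker a u| ≤ s / (2 * a) * (Pker a (u + s) + Pker a u) := by
  have hdiff : Pker a (u + s) - Pker a u = a * s * -(u + (u + s)) /
      (Real.pi * (a ^ 2 + (u + s) ^ 2) * (a ^ 2 + u ^ 2)) := by
    unfold Pker; field_simp; ring
  have hsum : s / (2 * a) * (Pker a (u + s) + Pker a u) =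
      s * ((2 * a ^ 2 + u ^ 2 + (u + s) ^ 2) / 2) /
        (Real.pi * (a ^ 2 + (u + s) ^ 2) * (a ^ 2 + u ^ 2)) := by
    unfold Pker; field_simp; ring
  have hamgm : a * |u + (u + s)| ≤ (2 * a ^ 2 + u ^ 2 + (u + s) ^ 2) / 2 := by
    nlinarith [abs_add_le u (u + s), sq_nonneg (a - |u|), sq_nonneg (a - |u + s|), sq_abs u,
      sq_abs (u + s)]
  rw [hdiff, hsum, abs_div, abs_of_pos (by positivity : 0 < Real.pi * _ * _), abs_mul, abs_neg,
    abs_of_nonneg (by positivity : 0 ≤ a * s), mul_comm a s, mul_assoc]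
  gcongr

theorem lintegral_enorm_Pker_add_sub_le {a s : ℝ} (ha : 0 < a) (hs : 0 ≤ s) :
    ∫⁻ w, ‖Pker a (w + s) - Pker a w‖ₑ ≤ ENNReal.ofReal (s / a) := by
  have hint := integrable_Pker ha
  have hint_shift := hint.comp_add_right s
  calc ∫⁻ w, ‖Pker a (w + s) - Pker a w‖ₑ
      ≤ ∫⁻ w, ENNReal.ofReal (s / (2 * a) * (Pker a (w + s) + Pker a w)) :=
        lintegral_mono fun w => by
          rw [Real.enorm_eq_ofReal_abs]
          exact ENNReal.ofReal_le_ofReal (abs_Pker_add_sub_le ha hs w)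
    _ = ENNReal.ofReal (∫ w, s / (2 * a) * (Pker a (w + s) + Pker a w)) :=
        (ofReal_integral_eq_lintegral_ofReal ((hint_shift.add hint).const_mul _)
          (.of_forall fun w => mul_nonneg (by positivity)
            (add_nonneg (Pker_nonneg ha _) (Pker_nonneg ha _)))).symm
    _ = ENNReal.ofReal (s / a) := by
        rw [integral_const_mul, integral_add hint_shift hint,
          integral_add_right_eq_self (Pker a) s, integral_Pker ha]
        congr 1
        field_simp
        norm_num

end PoissonKernel

section Heisenberg

open Set
open scoped Convolution ENNReal

theorem vmul_zero (h : HR) : vmul 0 h = h := by simp [vmul]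

theorem measurePreserving_vmul (s : ℝ) : MeasurePreserving (vmul s) volume volume :=
  (MeasurePreserving.id volume).prod
    ((MeasurePreserving.id volume).prod (measurePreserving_add_right volume s))

variable {X : Type*} [NormedAddCommGroup X] {f : HR → X}

theorem integrable_vmul (hf : Continuous f)
    (hc : HasCompactSupport f) (h : HR) : Integrable fun z => f (vmul z h) := by
  have hiso : Isometry fun z : ℝ => vmul z h := Isometry.of_dist_eq fun z w => by
    simp [vmul, Prod.dist_eq]
  exact (hf.comp hiso.continuous).integrable_of_hasCompactSupport
    (hc.comp_isClosedEmbedding hiso.isClosedEmbedding)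

theorem memLp_vmul_sub {p : ℝ≥0∞} (hf : MemLp f p) (s : ℝ) :
    MemLp (fun h => f (vmul s h) - f h) p :=
  (hf.comp_measurePreserving (measurePreserving_vmul s)).sub hf

theorem eLpNorm_eLpNorm_vmul_sub_eq {p q : ℝ} (hp : 0 < p) (hq : 0 < q)
    (hf : MemLp f (ENNReal.ofReal p)) :
    eLpNorm (fun s => ENNReal.ofReal s⁻¹ *
        eLpNorm (fun h => f (vmul s h) - f h) (ENNReal.ofReal p) volume)
        (ENNReal.ofReal q) (powMeasure (q / 2 - 1)) =
      (∫⁻ t in Ioi (0 : ℝ), ENNReal.ofReal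
        ((∫ h : HR, ‖f (vmul t h) - f h‖ ^ p) ^ (q / p) / t ^ (1 + q / 2))) ^ (1 / q) := by
  rw [eLpNorm_powMeasure hq]
  congr 1
  refine setLIntegral_congr_fun measurableSet_Ioi fun t (ht : 0 < t) => ?_
  have hweight : t ^ (q / 2 - 1) * t⁻¹ ^ q = (t ^ (1 + q / 2))⁻¹ := by
    rw [Real.inv_rpow ht.le, ← Real.rpow_neg ht.le, ← Real.rpow_neg ht.le, ← Real.rpow_add ht]
    ring_nf
  have hnorm : 0 ≤ ∫ h : HR, ‖f (vmul t h) - f h‖ ^ p := by positivity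
  rw [eLpNorm_eq_ofReal_integral_norm_rpow hp (memLp_vmul_sub hf t),
    ← ENNReal.ofReal_mul (by positivity), ENNReal.ofReal_rpow_of_nonneg (by positivity) hq.le,
    ← ENNReal.ofReal_mul (by positivity), Real.mul_rpow (by positivity) (by positivity),
    ← mul_assoc, hweight, ← Real.rpow_mul hnorm, one_div_mul_eq_div, inv_mul_eq_div]

variable [NormedSpace ℝ X]

theorem conv_vmul (ψ : ℝ → ℝ) (f : HR → X) (z : ℝ) (h : HR) :
    conv ψ f (vmul z h) = (ψ ⋆ fun z => f (vmul z h)) z := by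
  simp only [conv, vmul, convolution_lsmul, add_sub_assoc]

theorem enorm_conv_le (ψ : ℝ → ℝ) (f : HR → X) (h : HR) :
    ‖conv ψ f h‖ₑ ≤ ∫⁻ u, ‖ψ u‖ₑ * ‖f (vmul (-u) h)‖ₑ := by
  refine (enorm_integral_le_lintegral_enorm _).trans_eq ?_
  simp only [enorm_smul, vmul, sub_eq_add_neg]

theorem stronglyMeasurable_uncurry_conv {β : Type*} [MeasurableSpace β] (hf : Continuous f)
    {ψ : β → ℝ → ℝ} (hψ : Measurable (Function.uncurry ψ)) :
    StronglyMeasurable (Function.uncurry fun b h => conv (ψ b) f h) := by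
  have hker : Measurable fun x : (β × HR) × ℝ => ψ x.1.1 x.2 :=
    hψ.comp (measurable_fst.fst.prodMk measurable_snd)
  have hshift : Continuous fun y : HR × ℝ => f (y.1.1, y.1.2.1, y.1.2.2 - y.2) := by fun_prop
  exact (hker.stronglyMeasurable.smul (hshift.stronglyMeasurable.comp_measurable
    (measurable_fst.snd.prodMk measurable_snd))).integral_prod_right

theorem stronglyMeasurable_conv (hf : Continuous f) {ψ : ℝ → ℝ} (hψ : Measurable ψ) :
    StronglyMeasurable (conv ψ f) :=
  (stronglyMeasurable_uncurry_conv hf (ψ := fun _ => ψ) (hψ.comp measurable_snd)).of_uncurry_left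
    (x := ())

theorem enorm_vmul_sub_le [CompleteSpace X] (hf : Continuous f) {h : HR}
    (hint : Integrable fun z => f (vmul z h)) {s : ℝ} (hs : 0 < s) :
    ‖f (vmul s h) - f h‖ₑ ≤ (∫⁻ r in Ioo 0 s, ‖conv (Qker r) f (vmul s h)‖ₑ) +
      (∫⁻ r in Ioo 0 s, ‖conv (Qker r) f h‖ₑ) + ∫⁻ a in Ioi (s / 2),
        2 * ∫⁻ w, ‖Pker a (w + s) - Pker a w‖ₑ * ‖conv (Qker a) f (vmul (-w) h)‖ₑ := by
  simpa only [← conv_vmul, zero_add, zero_sub, vmul_zero] using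
    enorm_add_sub_le_lintegral_Qker_convolution hint (hf.comp (by unfold vmul; fun_prop)) 0 hs

theorem eLpNorm_conv_le {p : ℝ≥0∞} (hp : 1 ≤ p) {ψ : ℝ → ℝ} (hψ : Measurable ψ)
    (hf : Continuous f) :
    eLpNorm (conv ψ f) p volume ≤ (∫⁻ u, ‖ψ u‖ₑ) * eLpNorm f p volume := by
  rw [← eLpNorm_enorm f]
  refine (eLpNorm_mono_enorm fun h => ?_).trans
    (eLpNorm_lintegral_mul_comp_le hp hψ.enorm hf.enorm.measurable
      (T := fun u h => vmul (-u) h) (by unfold vmul Function.uncurry; fun_prop)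
      fun u => measurePreserving_vmul (-u))
  rw [enorm_eq_self]
  exact enorm_conv_le ψ f h

theorem memLp_conv {p : ℝ≥0∞} (hp : 1 ≤ p) (hfc : Continuous f) (hf : MemLp f p) {ψ : ℝ → ℝ}
    (hψ : Measurable ψ) (hψi : Integrable ψ) : MemLp (conv ψ f) p :=
  ⟨(stronglyMeasurable_conv hfc hψ).aestronglyMeasurable,
    (eLpNorm_conv_le hp hψ hfc).trans_lt (ENNReal.mul_lt_top hψi.2 hf.2)⟩

theorem measurable_eLpNorm_conv_Qker (hf : Continuous f) (p : ℝ≥0∞) :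
    Measurable fun t => eLpNorm (conv (Qker t) f) p volume :=
  measurable_eLpNorm_prodMk_left p (stronglyMeasurable_uncurry_conv hf measurable_Qker).enorm

theorem eLpNorm_lintegral_Pker_sub_mul_le (hf : Continuous f) {p : ℝ≥0∞} (hp : 1 ≤ p) {a s : ℝ}
    (ha : 0 < a) (hs : 0 ≤ s) :
    eLpNorm (fun h => 2 * ∫⁻ w, ‖Pker a (w + s) - Pker a w‖ₑ * ‖conv (Qker a) f (vmul (-w) h)‖ₑ)
        p volume ≤
      ENNReal.ofReal (2 * s / a) * eLpNorm (conv (Qker a) f) p volume := by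
  have hG : Measurable fun h => ‖conv (Qker a) f h‖ₑ :=
    (stronglyMeasurable_conv hf measurable_Qker.of_uncurry_left).enorm
  have hk : Measurable fun w => ‖Pker a (w + s) - Pker a w‖ₑ := by
    unfold Pker; fun_prop
  have hT : Measurable (Function.uncurry fun (w : ℝ) (h : HR) => vmul (-w) h) := by
    unfold vmul Function.uncurry; fun_prop
  have hconv : Measurable fun h =>
      ∫⁻ w, ‖Pker a (w + s) - Pker a w‖ₑ * ‖conv (Qker a) f (vmul (-w) h)‖ₑ :=
    ((hk.comp measurable_snd).mul (hG.comp (hT.comp measurable_swap))).lintegral_prod_right'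
  rw [eLpNorm_const_mul_ennreal _ _ hconv,
    ← eLpNorm_enorm (conv (Qker a) f), mul_div_assoc, ENNReal.ofReal_mul zero_le_two,
    ENNReal.ofReal_ofNat, mul_assoc]
  gcongr
  refine (eLpNorm_lintegral_mul_comp_le hp hk hG hT fun w => measurePreserving_vmul (-w)).trans ?_
  gcongr
  exact lintegral_enorm_Pker_add_sub_le ha hs

theorem eLpNorm_vmul_sub_le [CompleteSpace X] (hf : Continuous f)
    (hint : ∀ h, Integrable fun z => f (vmul z h)) {p : ℝ≥0∞} (hp : 1 ≤ p) {s : ℝ} (hs : 0 < s) :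
    eLpNorm (fun h => f (vmul s h) - f h) p volume ≤
      2 * (∫⁻ r in Ioo 0 s, eLpNorm (conv (Qker r) f) p volume) +
        ∫⁻ a in Ioi (s / 2), ENNReal.ofReal (2 * s / a) * eLpNorm (conv (Qker a) f) p volume := by
  set near : HR → ℝ≥0∞ := fun h => ∫⁻ r in Ioo 0 s, ‖conv (Qker r) f h‖ₑ
  set far : ℝ → HR → ℝ≥0∞ := fun a h =>
    2 * ∫⁻ w, ‖Pker a (w + s) - Pker a w‖ₑ * ‖conv (Qker a) f (vmul (-w) h)‖ₑ
  have hQ : Measurable (Function.uncurry fun r h => ‖conv (Qker r) f h‖ₑ) :=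
    (stronglyMeasurable_uncurry_conv hf measurable_Qker).enorm
  have hnear : Measurable near := hQ.lintegral_prod_left
  have hfar : Measurable (Function.uncurry far) := by
    have hQw : Measurable fun x : (ℝ × HR) × ℝ => ‖conv (Qker x.1.1) f (vmul (-x.2) x.1.2)‖ₑ :=
      hQ.comp (by unfold vmul; fun_prop :
        Measurable fun x : (ℝ × HR) × ℝ => (x.1.1, vmul (-x.2) x.1.2))
    have hPw : Measurable fun x : (ℝ × HR) × ℝ => ‖Pker x.1.1 (x.2 + s) - Pker x.1.1 x.2‖ₑ := by
      unfold Pker; fun_prop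
    exact (hPw.mul hQw).lintegral_prod_right'.const_mul 2
  have hnear_vmul : Measurable (near ∘ vmul s) := hnear.comp (measurePreserving_vmul s).measurable
  have hnear_le : eLpNorm near p volume ≤ ∫⁻ r in Ioo 0 s, eLpNorm (conv (Qker r) f) p volume := by
    simpa only [eLpNorm_enorm] using eLpNorm_lintegral_le_lintegral_eLpNorm hp hQ
  calc eLpNorm (fun h => f (vmul s h) - f h) p volume
      ≤ eLpNorm (near ∘ vmul s + near + fun h => ∫⁻ a in Ioi (s / 2), far a h) p volume :=
        eLpNorm_mono_enorm fun h => enorm_vmul_sub_le hf (hint h) hs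
    _ ≤ eLpNorm (near ∘ vmul s) p volume + eLpNorm near p volume +
        eLpNorm (fun h => ∫⁻ a in Ioi (s / 2), far a h) p volume :=
        (eLpNorm_add_le (hnear_vmul.add hnear).aestronglyMeasurable
          hfar.lintegral_prod_left.aestronglyMeasurable hp).trans <| by
          gcongr
          exact eLpNorm_add_le hnear_vmul.aestronglyMeasurable hnear.aestronglyMeasurable hp
    _ ≤ _ := by
        rw [eLpNorm_comp_measurePreserving hnear.aestronglyMeasurable (measurePreserving_vmul s),
          ← two_mul]
        gcongr
        refine (eLpNorm_lintegral_le_lintegral_eLpNorm hp hfar).trans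
          (setLIntegral_mono' measurableSet_Ioi fun a ha => ?_)
        exact eLpNorm_lintegral_Pker_sub_mul_le hf hp ((half_pos hs).trans ha) hs.le

theorem eLpNorm_eLpNorm_vmul_sub_le [CompleteSpace X] (hf : Continuous f)
    (hint : ∀ h, Integrable fun z => f (vmul z h)) {p : ℝ≥0∞} (hp : 1 ≤ p) {q : ℝ} (hq : 1 ≤ q) :
    eLpNorm (fun s => ENNReal.ofReal s⁻¹ * eLpNorm (fun h => f (vmul s h) - f h) p volume)
        (ENNReal.ofReal q) (powMeasure (q / 2 - 1)) ≤
      ENNReal.ofReal (4 + 4 * √2) * eLpNorm (fun t => eLpNorm (conv (Qker t) f) p volume)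
        (ENNReal.ofReal q) (powMeasure (q / 2 - 1)) := by
  have hq₀ : 0 < q := zero_lt_one.trans_le hq
  have hB := measurable_eLpNorm_conv_Qker hf p
  have hexp : -((q / 2 - 1 + 1) / (ENNReal.ofReal q).toReal) = -(1 / 2) := by
    rw [ENNReal.toReal_ofReal hq₀.le]; field_simp; ring
  have hhardy := eLpNorm_lintegral_mul_comp_mul_le (q / 2 - 1) (ENNReal.one_le_ofReal.2 hq)
    measurable_verticalKernel hB
  rw [hexp, lintegral_verticalKernel_mul_rpow] at hhardy
  refine le_trans (eLpNorm_mono_enorm_ae ?_) hhardy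
  filter_upwards [ae_powMeasure_pos _] with s hs
  rw [enorm_eq_self, enorm_eq_self, ENNReal.ofReal_inv_of_pos hs,
    ENNReal.inv_mul_le_iff (by simpa) (by simp), lintegral_verticalKernel_mul_comp_mul hs hB]
  exact eLpNorm_vmul_sub_le hf hint hp hs

theorem eLpNorm_eLpNorm_conv_Qker_eq {p q : ℝ} (hp : 1 ≤ p) (hq : 0 < q) (hfc : Continuous f)
    (hf : MemLp f (ENNReal.ofReal p)) :
    eLpNorm (fun t => eLpNorm (conv (Qker t) f) (ENNReal.ofReal p) volume)
        (ENNReal.ofReal q) (powMeasure (q / 2 - 1)) =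
      (∫⁻ t in Ioi (0 : ℝ), ENNReal.ofReal
        (t ^ (q / 2 - 1) * ((∫ h : HR, ‖conv (Qker t) f h‖ ^ p) ^ (1 / p)) ^ q)) ^ (1 / q) := by
  rw [eLpNorm_powMeasure hq]
  congr 1
  refine setLIntegral_congr_fun measurableSet_Ioi fun t (ht : 0 < t) => ?_
  have hconv : MemLp (conv (Qker t) f) (ENNReal.ofReal p) :=
    memLp_conv (ENNReal.one_le_ofReal.2 hp) hfc hf measurable_Qker.of_uncurry_left
      (integrable_Qker ht)
  rw [eLpNorm_eq_ofReal_integral_norm_rpow (zero_lt_one.trans_le hp) hconv,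
    ENNReal.ofReal_rpow_of_nonneg (by positivity) hq.le, ← ENNReal.ofReal_mul (by positivity)]

end Heisenberg

end HR

open HR in
theorem vertical_controlled_by_g_function_general {p q : ℝ} (hp : 1 ≤ p) (hq : 1 ≤ q)
    {X : Type*} [NormedAddCommGroup X] [NormedSpace ℝ X] [CompleteSpace X] {f : HR → X}
    (hf : Continuous f) (hint : ∀ h, Integrable fun z => f (vmul z h))
    (hfp : MemLp f (ENNReal.ofReal p)) :
    (∫⁻ t in Set.Ioi (0 : ℝ), ENNReal.ofReal
        ((∫ h : HR, ‖f (vmul t h) - f h‖ ^ p) ^ (q / p) / t ^ (1 + q / 2))) ^ (1 / q) ≤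
      ENNReal.ofReal (4 + 4 * √2) *
        (∫⁻ t in Set.Ioi (0 : ℝ), ENNReal.ofReal
          (t ^ (q / 2 - 1) * ((∫ h : HR, ‖conv (Qker t) f h‖ ^ p) ^ (1 / p)) ^ q)) ^ (1 / q) := by
  have hq₀ : 0 < q := zero_lt_one.trans_le hq
  rw [← eLpNorm_eLpNorm_vmul_sub_eq (zero_lt_one.trans_le hp) hq₀ hfp,
    ← eLpNorm_eLpNorm_conv_Qker_eq hp hq₀ hf hfp]
  exact eLpNorm_eLpNorm_vmul_sub_le hf hint (ENNReal.one_le_ofReal.2 hp) hq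

open HR in
/-- Lemma 2.6: the vertical Besov-type seminorm is controlled by the
generalized Littlewood–Paley `g`-function of `f`. -/
theorem vertical_controlled_by_g_function :
    ∃ C : ℝ, 0 < C ∧
      ∀ p q : ℝ, 1 ≤ p → 1 ≤ q →
        ∀ (X : Type) [NormedAddCommGroup X] [NormedSpace ℝ X] [CompleteSpace X],
          ∀ f : HR → X, ContDiff ℝ (⊤ : ℕ∞) f → HasCompactSupport f →
            (∫⁻ t in Set.Ioi (0 : ℝ),
                ENNReal.ofReal
                  ((∫ h : HR, ‖f (vmul t h) - f h‖ ^ p) ^ (q / p) / t ^ (1 + q / 2))) ^ (1 / q) ≤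
              ENNReal.ofReal C *
                (∫⁻ t in Set.Ioi (0 : ℝ),
                  ENNReal.ofReal
                    (t ^ (q / 2 - 1) *
                      ((∫ h : HR, ‖conv (Qker t) f h‖ ^ p) ^ (1 / p)) ^ q)) ^ (1 / q) :=
  ⟨4 + 4 * √2, by positivity, fun _ _ hp hq _ _ _ _ _ hf hc =>
    vertical_controlled_by_g_function_general hp hq hf.continuous
      (integrable_vmul hf.continuous hc) (hf.continuous.memLp_of_hasCompactSupport hc)⟩
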